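/- Let T ∈ (0,1). If Z(T) = ∑_{p ∈ dom U} 2^{−|p|/T} is a right-computable real number, then T is itself a right-computable real number. -/

import Mathlib

open Filter

/-- A set of finite binary strings is prefix-free if no element of it is a
prefix of another (distinct) element of it. -/
def PrefixFree (S : Set (List Bool)) : Prop :=
  ∀ p ∈ S, ∀ q ∈ S, p <+: q → p = q

/-- A computer: a partial recursive function from finite binary strings to
finite binary strings whose domain is a prefix-free set. -/
structure Computer where
  f : List Bool →. List Bool
  partrec : Partrec f
  prefixFree : PrefixFree {p | (f p).Dom}

/-- The domain of a computer. -/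
def Computer.domain (C : Computer) : Set (List Bool) := {p | (C.f p).Dom}

/-- A computer `U` is optimal if every computer can be simulated on `U` with
only a constant increase in program length. -/
def IsOptimal (U : Computer) : Prop :=
  ∀ C : Computer, ∃ d : ℕ, ∀ p : List Bool, (C.f p).Dom →
    ∃ p' : List Bool, p'.length ≤ p.length + d ∧ ∀ s, s ∈ C.f p → s ∈ U.f p'

/-- Program-size complexity `H(s)`: the minimal length of a program `p`
with `U(p) = s`. -/
noncomputable def H (U : Computer) (s : List Bool) : ℕ :=
  sInf {n | ∃ p : List Bool, p.length = n ∧ s ∈ U.f p}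

/-- The `n`-th bit (`n ≥ 1`) of the base-two expansion of `x mod 1`
(the expansion chosen with infinitely many zeros). -/
noncomputable def binDigit (x : ℝ) (n : ℕ) : Bool :=
  decide (⌊Int.fract x * 2 ^ n⌋ % 2 = 1)

/-- The first `n` bits of the base-two expansion of `x mod 1` (with
infinitely many zeros). -/
noncomputable def bits (x : ℝ) (n : ℕ) : List Bool :=
  (List.range n).map fun i => binDigit x (i + 1)

/-- A real `x` is weakly Chaitin `D`-random (w.r.t. the computer `U`). -/
def WeaklyChaitinRandom (U : Computer) (D x : ℝ) : Prop :=
  ∃ c : ℝ, ∀ n : ℕ, 1 ≤ n → D * n - c ≤ (H U (bits x n) : ℝ)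

/-- A real `x` is Chaitin `D`-random (w.r.t. the computer `U`). -/
def ChaitinRandom (U : Computer) (D x : ℝ) : Prop :=
  Tendsto (fun n : ℕ => (H U (bits x n) : ℝ) - D * n) atTop atTop

/-- A real `x` is `D`-compressible (w.r.t. the computer `U`). -/
def DCompressible (U : Computer) (D x : ℝ) : Prop :=
  Filter.limsup (fun n : ℕ => (H U (bits x n) : ℝ) / n) atTop ≤ D

/-- A computable real number. -/
def ComputableReal (T : ℝ) : Prop :=
  ∃ f : ℕ → ℚ, Computable f ∧ ∀ n : ℕ, 1 ≤ n → |T - (f n : ℝ)| < 1 / n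

/-- A right-computable real number. -/
def RightComputable (T : ℝ) : Prop :=
  ∃ g : ℕ → ℚ, Computable g ∧ (∀ n, T ≤ (g n : ℝ)) ∧
    Tendsto (fun n => ((g n : ℚ) : ℝ)) atTop (nhds T)

/-- A left-computable real number. -/
def LeftComputable (T : ℝ) : Prop := RightComputable (-T)

/-- The term `2 ^ (-|p| / T)` of the partition function `Z(T)`. -/
noncomputable def zterm (U : Computer) (T : ℝ) (p : U.domain) : ℝ :=
  (2 : ℝ) ^ (-((p : List Bool).length : ℝ) / T)

/-- The term `|p| ^ Q * 2 ^ (-|p| / T)` of `W(Q,T)`. -/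
noncomputable def wterm (U : Computer) (Q T : ℝ) (p : U.domain) : ℝ :=
  ((p : List Bool).length : ℝ) ^ Q * (2 : ℝ) ^ (-((p : List Bool).length : ℝ) / T)

/-- The term `|p| * 2 ^ (-|p| / T)` of `W(1,T)`. -/
noncomputable def wlterm (U : Computer) (T : ℝ) (p : U.domain) : ℝ :=
  ((p : List Bool).length : ℝ) * (2 : ℝ) ^ (-((p : List Bool).length : ℝ) / T)

/-- The term `|p| ^ 2 * 2 ^ (-|p| / T)` of `W(2,T)`. -/
noncomputable def wsqterm (U : Computer) (T : ℝ) (p : U.domain) : ℝ :=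
  ((p : List Bool).length : ℝ) ^ 2 * (2 : ℝ) ^ (-((p : List Bool).length : ℝ) / T)

/-- A lower-computable function `f : ℕ⁺ → [0,∞)` (represented on `ℕ`,
with all conditions imposed on positive arguments). -/
def LowerComputableFun (f : ℕ → ℝ) : Prop :=
  ∃ a : ℕ → ℕ → ℚ, Computable₂ a ∧
    (∀ k n : ℕ, 1 ≤ k → 1 ≤ n → (a k n : ℝ) ≤ f n) ∧
    (∀ n : ℕ, 1 ≤ n → Tendsto (fun k => ((a k n : ℚ) : ℝ)) atTop (nhds (f n)))

/-- A lower-computable semi-measure on finite binary strings. -/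
def LowerComputableSemiMeasure (r : List Bool → ℝ) : Prop :=
  (∀ s, 0 ≤ r s) ∧ (∀ s, r s ≤ 1) ∧ Summable r ∧ (∑' s, r s) ≤ 1 ∧
    ∃ f : ℕ → List Bool → ℚ, Computable₂ f ∧
      (∀ n s, ((f n s : ℚ) : ℝ) ≤ r s) ∧
      (∀ s, Tendsto (fun n => ((f n s : ℚ) : ℝ)) atTop (nhds (r s)))

/-- A universal probability. -/
def UniversalProbability (m : List Bool → ℝ) : Prop :=
  LowerComputableSemiMeasure m ∧
    ∀ r : List Bool → ℝ, LowerComputableSemiMeasure r →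
      ∃ c : ℝ, 0 < c ∧ ∀ s, c * r s ≤ m s

open Encodable in
theorem ratEnc_eq (n : ℕ) : @encode ℚ Rat.instEncodable (Denumerable.ofNat ℚ n) =
    Nat.nth (fun x => x ∈ Set.range (@encode ℚ Rat.instEncodable)) n := by
  let _ := @decidableRangeEncode ℚ Rat.instEncodable
  let _ : Infinite (Set.range (@encode ℚ Rat.instEncodable)) :=
    Infinite.of_injective _ (Equiv.ofInjective _ (@encode_injective ℚ Rat.instEncodable)).injective
  have : Denumerable.ofNat ℚ n = (@equivRangeEncode ℚ Rat.instEncodable).symm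
      (Nat.Subtype.ofNat (Set.range (@encode ℚ Rat.instEncodable)) n) := by
    unfold Rat.instDenumerable Denumerable.ofEncodableOfInfinite
    rw [Denumerable.ofEquiv_ofNat]
    congr 1
  rw [this]
  rw [Nat.nth_apply_eq_orderIsoOfNat (p := fun x => x ∈ Set.range (@encode ℚ Rat.instEncodable))
    (Set.infinite_coe_iff.mp (by assumption)) n]
  have h2 := @Nat.Subtype.orderIsoOfNat_apply (Set.range (@encode ℚ Rat.instEncodable)) _ _ n
  refine Eq.trans ?_ (congrArg Subtype.val h2).symm
  generalize Nat.Subtype.ofNat (Set.range (@encode ℚ Rat.instEncodable)) n = y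
  obtain ⟨q, rfl⟩ := (@equivRangeEncode ℚ Rat.instEncodable).surjective y
  rw [Equiv.symm_apply_apply]; rfl

def absZ (z : ℕ) : ℕ := if z % 2 = 0 then z / 2 else z / 2 + 1

def RatP (x : ℕ) : Prop :=
  0 < x.unpair.2 ∧ ∀ k < x.unpair.2 + 1,
    (absZ x.unpair.1 % k = 0 ∧ x.unpair.2 % k = 0) → k = 1

instance : DecidablePred RatP := fun x => by unfold RatP; infer_instance

theorem absZ_encode (z : ℤ) : absZ (Encodable.encode z) = z.natAbs := by
  cases z with
  | ofNat n =>
    change absZ (2 * n) = n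
    simp [absZ]
  | negSucc n =>
    change absZ (2 * n + 1) = n + 1
    simp [absZ]; omega

theorem ratP_iff (x : ℕ) : RatP x ↔ x ∈ Set.range (@Encodable.encode ℚ Rat.instEncodable) := by
  obtain ⟨⟨z, d⟩, rfl⟩ : ∃ y : ℤ × ℕ, Nat.pair (Encodable.encode y.1) y.2 = x := by
    refine ⟨(Denumerable.ofNat ℤ x.unpair.1, x.unpair.2), ?_⟩
    change Nat.pair (Encodable.encode (Denumerable.ofNat ℤ x.unpair.1)) x.unpair.2 = x
    rw [Denumerable.encode_ofNat, Nat.pair_unpair]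
  simp only [RatP, Nat.unpair_pair, absZ_encode]
  have key : (0 < d ∧ ∀ k < d + 1, (z.natAbs % k = 0 ∧ d % k = 0) → k = 1) ↔
      (d ≠ 0 ∧ z.natAbs.Coprime d) := by
    constructor
    · rintro ⟨h0, h⟩
      refine ⟨h0.ne', ?_⟩
      apply h (Nat.gcd z.natAbs d)
      · exact Nat.lt_succ_of_le (Nat.gcd_le_right _ h0)
      · exact ⟨Nat.mod_eq_zero_of_dvd (Nat.gcd_dvd_left _ _),
          Nat.mod_eq_zero_of_dvd (Nat.gcd_dvd_right _ _)⟩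
    · rintro ⟨h0, h⟩
      refine ⟨Nat.pos_of_ne_zero h0, fun k _ hk => ?_⟩
      exact Nat.eq_one_of_dvd_coprimes h (Nat.dvd_of_mod_eq_zero hk.1) (Nat.dvd_of_mod_eq_zero hk.2)
  rw [key]
  constructor
  · rintro ⟨h0, h⟩
    exact ⟨⟨z, d, h0, h⟩, rfl⟩
  · rintro ⟨q, hq⟩
    change Nat.pair (Encodable.encode q.num) q.den = _ at hq
    rw [Nat.pair_eq_pair] at hq
    obtain ⟨h1, rfl⟩ := hq
    obtain rfl := Encodable.encode_injective h1
    exact ⟨q.den_nz, q.reduced⟩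

theorem absZ_primrec : Primrec absZ := by
  have h2 : Primrec (fun z : ℕ => z / 2) := Primrec.nat_div.comp Primrec.id (Primrec.const 2)
  exact Primrec.ite (Primrec.eq.comp (Primrec.nat_mod.comp Primrec.id (Primrec.const 2)) (Primrec.const 0))
    h2 (Primrec.succ.comp h2)

theorem ratP_primrec : PrimrecPred RatP := by
  have hd : Primrec (fun x : ℕ => x.unpair.2) := Primrec.snd.comp Primrec.unpair
  have ha : Primrec (fun x : ℕ => absZ x.unpair.1) :=
    absZ_primrec.comp (Primrec.fst.comp Primrec.unpair)
  have hR : PrimrecRel (fun (k x : ℕ) =>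
      (absZ x.unpair.1 % k = 0 ∧ x.unpair.2 % k = 0) → k = 1) := by
    have h1 : PrimrecPred (fun p : ℕ × ℕ => absZ p.2.unpair.1 % p.1 = 0) :=
      Primrec.eq.comp (Primrec.nat_mod.comp (ha.comp Primrec.snd) Primrec.fst) (Primrec.const 0)
    have h2 : PrimrecPred (fun p : ℕ × ℕ => p.2.unpair.2 % p.1 = 0) :=
      Primrec.eq.comp (Primrec.nat_mod.comp (hd.comp Primrec.snd) Primrec.fst) (Primrec.const 0)
    have h3 : PrimrecPred (fun p : ℕ × ℕ => p.1 = 1) :=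
      Primrec.eq.comp Primrec.fst (Primrec.const 1)
    refine ((h1.and h2).not.or h3).of_eq fun p => ?_
    tauto
  have h4 := hR.forall_lt
  exact (Primrec.nat_lt.comp (Primrec.const 0) hd).and
    (h4.comp (Primrec.succ.comp hd) Primrec.id)

theorem comp_sum {α : Type*} [Primcodable α] {f : α → ℕ → ℕ} {g : α → ℕ}
    (hf : Computable₂ f) (hg : Computable g) :
    Computable (fun a => ∑ i ∈ Finset.range (g a), f a i) := by
  have h : Computable₂ (fun (a : α) (y : ℕ × ℕ) => y.2 + f a y.1) := by
    refine (Primrec.nat_add.to_comp).comp (Computable.snd.comp Computable.snd) ?_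
    exact hf.comp Computable.fst (Computable.fst.comp Computable.snd)
  refine (Computable.nat_rec hg (Computable.const 0) h).of_eq fun a => ?_
  induction g a with
  | zero => simp
  | succ n ih => rw [Finset.sum_range_succ, ← ih]

theorem ratP_bool : Computable (fun x => decide (RatP x)) := by
  obtain ⟨_, h⟩ := ratP_primrec
  exact (h.to_comp).of_eq fun _ => by congr

theorem ratEnc_computable :
    Computable (fun q : ℚ => @Encodable.encode ℚ Rat.instEncodable q) := by
  have hinf : (Set.ofPred RatP).Infinite := by
    have : Set.ofPred RatP = Set.range (@Encodable.encode ℚ Rat.instEncodable) := by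
      ext x; exact ratP_iff x
    rw [this]
    exact Set.infinite_range_of_injective (@Encodable.encode_injective ℚ Rat.instEncodable)
  have hc : Computable (fun x => Nat.count RatP x) := by
    refine (comp_sum (f := fun _ i => cond (decide (RatP i)) 1 0) (g := fun x : ℕ => x)
      (Computable.cond (ratP_bool.comp Computable.snd) (Computable.const 1) (Computable.const 0))
      Computable.id).of_eq fun x => ?_
    rw [Nat.count_eq_card_filter_range, Finset.card_filter]
    simp only [Bool.cond_decide]
  have hn : Computable (fun n => Nat.nth RatP n) := by
    have hb : Computable₂ (fun n x : ℕ => decide (RatP x) && decide (Nat.count RatP x = n)) := by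
      refine (Primrec.and.to_comp).comp (ratP_bool.comp Computable.snd) ?_
      obtain ⟨_, he⟩ := (Primrec.eq (α := ℕ))
      refine ((he.to_comp).comp ((hc.comp Computable.snd).pair Computable.fst)).of_eq fun _ => ?_
      congr
    refine (Partrec.rfind hb.partrec₂).of_eq_tot fun n => ?_
    obtain ⟨m, hm, -⟩ := Nat.rfind_min' (p := fun x => decide (RatP x) && decide (Nat.count RatP x = n))
      (m := Nat.nth RatP n) (by
        simp [Nat.count_nth_of_infinite hinf, Nat.nth_mem_of_infinite hinf])
    have := Nat.rfind_spec hm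
    simp at this
    have h2 := Nat.nth_count this.1
    rw [this.2] at h2
    rw [h2]; exact hm
  refine (hn.comp (@Computable.encode ℚ _)).of_eq fun q => ?_
  have h3 := ratEnc_eq (@Encodable.encode ℚ Rat.instDenumerable.toEncodable q)
  rw [Denumerable.ofNat_encode] at h3
  rw [h3]
  congr 1
  ext x; exact ratP_iff x

theorem rat_den_computable : Computable (fun q : ℚ => q.den) := by
  refine (Computable.snd.comp (Computable.unpair.comp ratEnc_computable)).of_eq fun q => ?_
  change (Nat.unpair (Nat.pair (Encodable.encode q.num) q.den)).2 = _
  simp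

theorem rat_num_computable : Computable (fun q : ℚ => q.num.toNat) := by
  have h : Primrec (fun z : ℕ => if z % 2 = 0 then z / 2 else 0) :=
    Primrec.ite (Primrec.eq.comp (Primrec.nat_mod.comp Primrec.id (Primrec.const 2))
      (Primrec.const 0)) (Primrec.nat_div.comp Primrec.id (Primrec.const 2)) (Primrec.const 0)
  refine (h.to_comp.comp (Computable.fst.comp (Computable.unpair.comp ratEnc_computable))).of_eq
    fun q => ?_
  have : (Nat.unpair (@Encodable.encode ℚ Rat.instEncodable q)).1 = Encodable.encode q.num := by
    change (Nat.unpair (Nat.pair (Encodable.encode q.num) q.den)).1 = _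
    simp
  rw [this]
  cases q.num with
  | ofNat n =>
    change (if (2 * n) % 2 = 0 then (2 * n) / 2 else 0) = n
    simp
  | negSucc n =>
    change (if (2 * n + 1) % 2 = 0 then (2 * n + 1) / 2 else 0) = 0
    simp

theorem comp_ltb {α : Type*} [Primcodable α] {f g : α → ℕ}
    (hf : Computable f) (hg : Computable g) :
    Computable (fun a => decide (f a < g a)) := by
  obtain ⟨_, he⟩ := Primrec.nat_lt
  refine ((he.to_comp).comp (hf.pair hg)).of_eq fun _ => ?_
  congr

theorem comp_leb {α : Type*} [Primcodable α] {f g : α → ℕ}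
    (hf : Computable f) (hg : Computable g) :
    Computable (fun a => decide (f a ≤ g a)) := by
  obtain ⟨_, he⟩ := Primrec.nat_le
  refine ((he.to_comp).comp (hf.pair hg)).of_eq fun _ => ?_
  congr

theorem comp_mul {α : Type*} [Primcodable α] {f g : α → ℕ}
    (hf : Computable f) (hg : Computable g) :
    Computable (fun a => f a * g a) := Primrec.nat_mul.to_comp.comp hf hg

theorem comp_pow {α : Type*} [Primcodable α] {f g : α → ℕ}
    (hf : Computable f) (hg : Computable g) :
    Computable (fun a => f a ^ g a) := by
  have h : Computable₂ (fun (a : α) (y : ℕ × ℕ) => y.2 * f a) :=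
    comp_mul (Computable.snd.comp Computable.snd) (hf.comp Computable.fst)
  refine (Computable.nat_rec hg (Computable.const 1) h).of_eq fun a => ?_
  induction g a with
  | zero => simp
  | succ n ih => rw [pow_succ, ← ih]

theorem rat_lt_toNat {r c : ℚ} (hr : 0 < r) (hc : 0 < c) :
    (r.num.toNat * c.den < c.num.toNat * r.den) ↔ r < c := by
  rw [Rat.lt_iff]
  have h1 : ((r.num.toNat : ℕ) : ℤ) = r.num := Int.toNat_of_nonneg (Rat.num_pos.2 hr).le
  have h2 : ((c.num.toNat : ℕ) : ℤ) = c.num := Int.toNat_of_nonneg (Rat.num_pos.2 hc).le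
  rw [← h1, ← h2]
  norm_cast

theorem rightComputable_of_enum {T : ℝ} (hT0 : 0 < T) (hT1 : T < 1) (A : ℕ → ℚ)
    (hA : Computable A) (test : ℕ → Bool) (htest : Computable test)
    (hs : ∀ j, test j = true → T < A j)
    (hc : ∀ r : ℚ, T < r → ∃ j, test j = true ∧ A j = r) : RightComputable T := by
  let step : ℕ → ℚ → ℚ := fun j c =>
    cond (test j && decide ((A j).num.toNat * c.den < c.num.toNat * (A j).den)) (A j) c
  let cur : ℕ → ℚ := fun n => Nat.rec (motive := fun _ => ℚ) 1 step n
  have hcur : Computable cur := by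
    have h : Computable₂ (fun (_ : ℕ) (y : ℕ × ℚ) => step y.1 y.2) := by
      have hj : Computable (fun p : ℕ × (ℕ × ℚ) => p.2.1) := Computable.fst.comp Computable.snd
      have hq : Computable (fun p : ℕ × (ℕ × ℚ) => p.2.2) := Computable.snd.comp Computable.snd
      refine Computable.cond (Primrec.and.to_comp.comp (htest.comp hj) (comp_ltb ?_ ?_))
        (hA.comp hj) hq
      · exact comp_mul (rat_num_computable.comp (hA.comp hj)) (rat_den_computable.comp hq)
      · exact comp_mul (rat_num_computable.comp hq) (rat_den_computable.comp (hA.comp hj))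
    exact Computable.nat_rec Computable.id (Computable.const 1) h
  have hsucc : ∀ n, cur (n + 1) = step n (cur n) := fun n => rfl
  have hgt : ∀ n, T < cur n := by
    intro n
    induction n with
    | zero => change T < ((1 : ℚ) : ℝ); simpa using hT1
    | succ n ih =>
      rw [hsucc]
      simp only [step]
      rcases h : (test n && decide ((A n).num.toNat * (cur n).den <
        (cur n).num.toNat * (A n).den)) with _ | _
      · simpa using ih
      · simp only [Bool.and_eq_true] at h
        exact hs n h.1
  have hpos : ∀ n, 0 < cur n := fun n => by
    have := hT0.trans (hgt n)
    exact_mod_cast this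
  have hle : ∀ n, cur (n + 1) ≤ cur n ∧ (test n = true → cur (n + 1) ≤ A n) := by
    intro n
    rw [hsucc]
    simp only [step]
    by_cases ht : test n = true
    · have hAp : 0 < A n := by
        have := hT0.trans (hs n ht)
        exact_mod_cast this
      have hl := rat_lt_toNat hAp (hpos n)
      by_cases hlt : A n < cur n
      · simp [ht, hl.2 hlt, hlt.le]
      · have : ¬ ((A n).num.toNat * (cur n).den < (cur n).num.toNat * (A n).den) := by
          rwa [hl]
        simp only [ht, this, decide_false, Bool.and_false, cond_false]
        exact ⟨le_rfl, fun _ => not_lt.1 hlt⟩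
    · simp [ht]
  have hanti : Antitone cur := antitone_nat_of_succ_le fun n => (hle n).1
  refine ⟨cur, hcur, fun n => (hgt n).le, ?_⟩
  rw [Metric.tendsto_atTop]
  intro ε hε
  obtain ⟨r, hr1, hr2⟩ := exists_rat_btwn (show T < T + ε by linarith)
  obtain ⟨j, hj, rfl⟩ := hc r hr1
  refine ⟨j + 1, fun n hn => ?_⟩
  have h1 : cur n ≤ A j := (hanti hn).trans ((hle j).2 hj)
  have h2 : ((cur n : ℚ) : ℝ) ≤ A j := by exact_mod_cast h1
  rw [Real.dist_eq, abs_of_pos (by linarith [hgt n])]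
  linarith

theorem inner_floor (a b k l : ℕ) (ha : 0 < a) :
    (∑ m ∈ Finset.range (2 ^ k), cond (decide ((m + 1) ^ a * 2 ^ (l * b) ≤ 2 ^ (k * a))) 1 0) =
      ⌊(2 : ℝ) ^ k * (2 : ℝ) ^ (-(l : ℝ) / ((a : ℝ) / b))⌋₊ := by
  set x : ℝ := (2 : ℝ) ^ k * (2 : ℝ) ^ (-(l : ℝ) / ((a : ℝ) / b)) with hx
  have hx0 : 0 ≤ x := by positivity
  have hw : (2 : ℝ) ^ (-(l : ℝ) / ((a : ℝ) / b)) ≤ 1 := by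
    apply Real.rpow_le_one_of_one_le_of_nonpos (by norm_num)
    apply div_nonpos_of_nonpos_of_nonneg
    · simp
    · positivity
  have hxle : x ≤ 2 ^ k := by
    rw [hx]; exact mul_le_of_le_one_right (by positivity) hw
  have hxa : x ^ a * 2 ^ (l * b) = 2 ^ (k * a) := by
    rw [hx, mul_pow, ← pow_mul, ← Real.rpow_mul_natCast (by norm_num), mul_assoc]
    have : (2 : ℝ) ^ (-(l : ℝ) / ((a : ℝ) / b) * (a : ℕ)) * 2 ^ (l * b) = 1 := by
      rw [← Real.rpow_natCast 2 (l * b), ← Real.rpow_add (by norm_num)]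
      have : (-(l : ℝ) / ((a : ℝ) / b) * (a : ℕ)) + ((l * b : ℕ) : ℝ) = 0 := by
        have : (a : ℝ) ≠ 0 := by positivity
        push_cast
        rw [div_div_eq_mul_div]
        field_simp
        ring
      rw [this, Real.rpow_zero]
    rw [this, mul_one]
  have key : ∀ m : ℕ, (m + 1) ^ a * 2 ^ (l * b) ≤ 2 ^ (k * a) ↔ m < ⌊x⌋₊ := by
    intro m
    rw [← Nat.succ_le_iff, Nat.le_floor_iff hx0]
    have : (m + 1) ^ a * 2 ^ (l * b) ≤ 2 ^ (k * a) ↔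
        ((m.succ : ℕ) : ℝ) ^ a * 2 ^ (l * b) ≤ 2 ^ (k * a) := by
      rw [Nat.succ_eq_add_one]; exact_mod_cast Iff.rfl
    rw [this, ← hxa, mul_le_mul_iff_left₀ (by positivity)]
    exact pow_le_pow_iff_left₀ (by positivity) hx0 ha.ne'
  have hfl : ⌊x⌋₊ ≤ 2 ^ k := by
    have : (⌊x⌋₊ : ℝ) ≤ 2 ^ k := (Nat.floor_le hx0).trans hxle
    exact_mod_cast this
  simp only [key, Bool.cond_decide]
  rw [← Finset.card_filter]
  have : (Finset.range (2 ^ k)).filter (fun m => m < ⌊x⌋₊) = Finset.range ⌊x⌋₊ := by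
    ext m; simp; omega
  rw [this, Finset.card_range]

def SS (Dk : ℕ → ℕ → Bool) (L : ℕ → ℕ) (a b k : ℕ) : ℕ :=
  ∑ i ∈ Finset.range k, ∑ m ∈ Finset.range (2 ^ k),
    cond (Dk k i && decide ((m + 1) ^ a * 2 ^ (L i * b) ≤ 2 ^ (k * a))) 1 0

theorem SS_computable {α : Type*} [Primcodable α] (Dk : ℕ → ℕ → Bool) (L : ℕ → ℕ)
    (hD : Computable₂ Dk) (hL : Computable L) {a b k : α → ℕ}
    (ha : Computable a) (hb : Computable b) (hk : Computable k) :
    Computable (fun x => SS Dk L (a x) (b x) (k x)) := by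
  unfold SS
  refine comp_sum (f := fun x i => ∑ m ∈ Finset.range (2 ^ (k x)),
    cond (Dk (k x) i && decide ((m + 1) ^ (a x) * 2 ^ (L i * (b x)) ≤ 2 ^ (k x * a x))) 1 0) ?_ hk
  refine comp_sum (α := α × ℕ) (f := fun y m =>
    cond (Dk (k y.1) y.2 && decide ((m + 1) ^ (a y.1) * 2 ^ (L y.2 * (b y.1)) ≤
      2 ^ (k y.1 * a y.1))) 1 0) (g := fun y => 2 ^ (k y.1)) ?_
      (comp_pow (Computable.const 2) (hk.comp Computable.fst))
  have hx : Computable (fun p : (α × ℕ) × ℕ => p.1.1) := Computable.fst.comp Computable.fst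
  have hi : Computable (fun p : (α × ℕ) × ℕ => p.1.2) := Computable.snd.comp Computable.fst
  have hm : Computable (fun p : (α × ℕ) × ℕ => p.2) := Computable.snd
  refine Computable.cond (Primrec.and.to_comp.comp (hD.comp (hk.comp hx) hi) (comp_leb ?_ ?_))
    (Computable.const 1) (Computable.const 0)
  · refine comp_mul (comp_pow (Computable.succ.comp hm) (ha.comp hx))
      (comp_pow (Computable.const 2) (comp_mul (hL.comp hi) (hb.comp hx)))
  · exact comp_pow (Computable.const 2) (comp_mul (hk.comp hx) (ha.comp hx))

theorem SS_eq (Dk : ℕ → ℕ → Bool) (L : ℕ → ℕ) (r : ℚ) (hr : 0 < r) (k : ℕ) :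
    (SS Dk L r.num.toNat r.den k : ℕ) = ∑ i ∈ Finset.range k,
      if Dk k i then ⌊(2 : ℝ) ^ k * (2 : ℝ) ^ (-(L i : ℝ) / (r : ℝ))⌋₊ else 0 := by
  unfold SS
  refine Finset.sum_congr rfl fun i _ => ?_
  have hn : 0 < r.num := Rat.num_pos.2 hr
  have hrr : (r : ℝ) = ((r.num.toNat : ℕ) : ℝ) / ((r.den : ℕ) : ℝ) := by
    have h1 : ((r.num.toNat : ℕ) : ℤ) = r.num := Int.toNat_of_nonneg hn.le
    have h2 : ((r.num.toNat : ℕ) : ℝ) = (r.num : ℝ) := by exact_mod_cast congrArg (Int.cast : ℤ → ℝ) h1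
    rw [h2]
    exact Rat.cast_def r
  cases h : Dk k i with
  | false => simp
  | true =>
    simp only [Bool.true_and, if_true]
    rw [inner_floor _ _ _ _ (by omega), ← hrr]

theorem main_nat (D : ℕ → Prop) (Dk : ℕ → ℕ → Bool) (L : ℕ → ℕ)
    (hDk : Computable₂ Dk) (hL : Computable L)
    (hsound : ∀ k i, Dk k i = true → D i)
    (hmono : ∀ k k' i, k ≤ k' → Dk k i = true → Dk k' i = true)
    (hcomp : ∀ i, D i → ∃ k, Dk k i = true)
    (hne : ∃ i, D i ∧ 0 < L i)
    {T : ℝ} (hT0 : 0 < T) (hT1 : T < 1)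
    (h : ℝ → ℕ → ℝ) (hh : ∀ t i, D i → h t i = (2 : ℝ) ^ (-(L i : ℝ) / t))
    (hh0 : ∀ t i, ¬ D i → h t i = 0)
    (hsum : Summable (h T)) (hZ : RightComputable (∑' i, h T i)) : RightComputable T := by
  obtain ⟨g, hg, hgle, hglim⟩ := hZ
  have hnn : ∀ t i, 0 ≤ h t i := by
    intro t i
    by_cases hi : D i
    · rw [hh t i hi]; positivity
    · rw [hh0 t i hi]
  have hmon : ∀ s t i, 0 < s → s ≤ t → h s i ≤ h t i := by
    intro s t i hs hst
    by_cases hi : D i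
    · rw [hh _ i hi, hh _ i hi]
      apply Real.rpow_le_rpow_of_exponent_le (by norm_num)
      rw [neg_div, neg_div]
      apply neg_le_neg
      exact div_le_div_of_nonneg_left (by positivity) hs hst
    · rw [hh0 _ i hi, hh0 _ i hi]
  let A : ℕ → ℚ := fun j => Denumerable.ofNat ℚ j.unpair.1
  let K : ℕ → ℕ := fun j => j.unpair.2.unpair.1
  let N : ℕ → ℕ := fun j => j.unpair.2.unpair.2
  have hA : Computable A := (Computable.ofNat ℚ).comp (Computable.fst.comp Computable.unpair)
  have hK : Computable K := Computable.fst.comp (Computable.unpair.comp (Computable.snd.comp Computable.unpair))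
  have hN : Computable N := Computable.snd.comp (Computable.unpair.comp (Computable.snd.comp Computable.unpair))
  let test : ℕ → Bool := fun j => decide (0 < (A j).num.toNat) &&
    decide ((g (N j)).num.toNat * 2 ^ (K j) <
      SS Dk L (A j).num.toNat (A j).den (K j) * (g (N j)).den)
  have htest : Computable test := by
    refine Primrec.and.to_comp.comp (comp_ltb (Computable.const 0) (rat_num_computable.comp hA))
      (comp_ltb ?_ ?_)
    · exact comp_mul (rat_num_computable.comp (hg.comp hN)) (comp_pow (Computable.const 2) hK)
    · exact comp_mul (SS_computable Dk L hDk hL (rat_num_computable.comp hA)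
        (rat_den_computable.comp hA) hK) (rat_den_computable.comp (hg.comp hN))
  have hgpos : ∀ n, 0 ≤ g n := by
    intro n
    have : (0 : ℝ) ≤ g n := (tsum_nonneg (hnn T)).trans (hgle n)
    exact_mod_cast this
  have htiff : ∀ n k s : ℕ, ((g n).num.toNat * 2 ^ k < s * (g n).den) ↔
      ((g n : ℚ) : ℝ) < (s : ℝ) / 2 ^ k := by
    intro n k s
    have h1 : (((g n).num.toNat : ℕ) : ℤ) = (g n).num :=
      Int.toNat_of_nonneg (Rat.num_nonneg.2 (hgpos n))
    have h2 : (((g n).num.toNat : ℕ) : ℝ) = ((g n).num : ℝ) := by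
      exact_mod_cast congrArg (Int.cast : ℤ → ℝ) h1
    have hden : (0 : ℝ) < (g n).den := by exact_mod_cast (g n).den_pos
    rw [Rat.cast_def, ← h2, div_lt_div_iff₀ hden (by positivity)]
    exact_mod_cast Iff.rfl
  refine rightComputable_of_enum hT0 hT1 A hA test htest ?_ ?_
  · intro j hj
    simp only [test, Bool.and_eq_true, decide_eq_true_eq, htiff] at hj
    obtain ⟨hj1, hj2⟩ := hj
    have hr : 0 < A j := by
      rw [← Rat.num_pos]; omega
    have hr' : (0 : ℝ) < A j := by exact_mod_cast hr
    by_contra hcon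
    push Not at hcon
    rw [SS_eq Dk L _ hr] at hj2
    have hS : ((∑ i ∈ Finset.range (K j),
        if Dk (K j) i then ⌊(2 : ℝ) ^ (K j) * (2 : ℝ) ^ (-(L i : ℝ) / (A j : ℝ))⌋₊ else 0 : ℕ) : ℝ)
        ≤ 2 ^ (K j) * ∑ i ∈ Finset.range (K j), h T i := by
      push_cast
      rw [Finset.mul_sum]
      refine Finset.sum_le_sum fun i _ => ?_
      split_ifs with hi
      · refine (Nat.floor_le (by positivity)).trans ?_
        rw [← hh _ i (hsound _ _ hi)]
        exact mul_le_mul_of_nonneg_left (hmon _ _ i hr' hcon) (by positivity)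
      · simpa using hnn T i
    have h1 := hsum.sum_le_tsum (Finset.range (K j)) (fun i _ => hnn T i)
    have h2 := hgle (N j)
    rw [lt_div_iff₀ (by positivity)] at hj2
    have h3 : ((g (N j) : ℚ) : ℝ) * 2 ^ (K j) < (∑' i, h T i) * 2 ^ (K j) := by
      refine hj2.trans_le (hS.trans ?_)
      rw [mul_comm]
      exact mul_le_mul_of_nonneg_right h1 (by positivity)
    have := lt_of_mul_lt_mul_right h3 (by positivity)
    linarith
  · intro r hr
    have hr0' : (0 : ℝ) < r := hT0.trans hr
    have hr0 : 0 < r := by exact_mod_cast hr0'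
    suffices ∃ k n : ℕ, ((g n : ℚ) : ℝ) < (SS Dk L r.num.toNat r.den k : ℝ) / 2 ^ k by
      obtain ⟨k, n, hkn⟩ := this
      have hAj : A (Nat.pair (@Encodable.encode ℚ Rat.instDenumerable.toEncodable r) (Nat.pair k n)) = r := by
        simp only [A, Nat.unpair_pair]
        exact Denumerable.ofNat_encode r
      refine ⟨_, ?_, hAj⟩
      simp only [test, Bool.and_eq_true, decide_eq_true_eq, htiff]
      rw [hAj]
      simp only [K, N, Nat.unpair_pair]
      have := Rat.num_pos.2 hr0
      exact ⟨by omega, hkn⟩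
    obtain ⟨i0, hi0, hLi0⟩ := hne
    have hδ : h T i0 < h r i0 := by
      rw [hh _ _ hi0, hh _ _ hi0]
      apply Real.rpow_lt_rpow_of_exponent_lt (by norm_num)
      rw [neg_div, neg_div]
      apply neg_lt_neg
      exact div_lt_div_of_pos_left (by exact_mod_cast hLi0) hT0 hr
    obtain ⟨F, hF⟩ : ∃ F : Finset ℕ, ∑' i, h T i < ∑ i ∈ F, h r i := by
      have hev := (hsum.hasSum.eventually_const_lt
        (show (∑' i, h T i) - (h r i0 - h T i0) < ∑' i, h T i by linarith))
      obtain ⟨F, hF1, hF2⟩ := (hev.and (eventually_ge_atTop ({i0} : Finset ℕ))).exists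
      refine ⟨F, ?_⟩
      have hmem : i0 ∈ F := hF2 (Finset.mem_singleton_self i0)
      rw [← Finset.add_sum_erase F _ hmem] at hF1 ⊢
      have : ∑ i ∈ F.erase i0, h T i ≤ ∑ i ∈ F.erase i0, h r i :=
        Finset.sum_le_sum fun i _ => hmon _ _ i hT0 hr.le
      linarith
    have hk1 : ∀ᶠ k : ℕ in atTop, ∀ i ∈ F, i < k ∧ (D i → Dk k i = true) := by
      rw [Filter.eventually_all_finset]
      intro i _
      refine (eventually_gt_atTop i).and ?_
      by_cases hi : D i
      · obtain ⟨k, hk⟩ := hcomp i hi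
        filter_upwards [eventually_ge_atTop k] with k' hk' _
        exact hmono _ _ _ hk' hk
      · simp [hi]
    have hlim : Tendsto (fun k : ℕ => ∑ i ∈ F, (h r i - (1 / 2 : ℝ) ^ k)) atTop
        (nhds (∑ i ∈ F, h r i)) := by
      refine tendsto_finsetSum F fun i _ => ?_
      have := (tendsto_pow_atTop_nhds_zero_of_lt_one (r := (1 / 2 : ℝ)) (by norm_num) (by norm_num))
      simpa using tendsto_const_nhds.sub this
    obtain ⟨k, hk1, hk2⟩ := (hk1.and (hlim.eventually_const_lt hF)).exists
    have hlow : ∑ i ∈ F, (h r i - (1 / 2 : ℝ) ^ k) ≤ (SS Dk L r.num.toNat r.den k : ℝ) / 2 ^ k := by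
      rw [SS_eq Dk L r hr0]
      push_cast
      rw [Finset.sum_div]
      have hsub : F ⊆ Finset.range k := fun i hi => Finset.mem_range.2 (hk1 i hi).1
      refine le_trans ?_ (Finset.sum_le_sum_of_subset_of_nonneg hsub ?_)
      · refine Finset.sum_le_sum fun i hi => ?_
        by_cases hDi : D i
        · rw [if_pos ((hk1 i hi).2 hDi), hh _ _ hDi, le_div_iff₀ (by positivity), sub_mul,
            ← mul_pow]
          have := Nat.lt_floor_add_one ((2 : ℝ) ^ k * (2 : ℝ) ^ (-(L i : ℝ) / (r : ℝ)))
          norm_num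
          linarith
        · rw [hh0 _ _ hDi]
          have : (0 : ℝ) ≤ (1 / 2) ^ k := by positivity
          refine le_trans (by linarith) (div_nonneg ?_ (by positivity))
          split_ifs <;> positivity
      · intro i _ _
        refine div_nonneg ?_ (by positivity)
        split_ifs <;> positivity
    obtain ⟨n, hn⟩ := (hglim.eventually_lt_const (hk2.trans_le hlow)).exists
    exact ⟨k, n, hn⟩

theorem prefixFree_uniquelyDecodable {S : Set (List Bool)} (hS : PrefixFree S)
    (hn : [] ∉ S) : InformationTheory.UniquelyDecodable S := by
  intro L₁
  induction L₁ with
  | nil =>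
    intro L₂ _ h2 hf
    cases L₂ with
    | nil => rfl
    | cons w L =>
      simp at hf
      exact absurd (hf.1 ▸ h2 w (by simp)) hn
  | cons w₁ L₁ ih =>
    intro L₂ h1 h2 hf
    cases L₂ with
    | nil =>
      simp at hf
      exact absurd (hf.1 ▸ h1 w₁ (by simp)) hn
    | cons w₂ L₂ =>
      simp only [List.flatten_cons] at hf
      have hw : w₁ = w₂ := by
        have p1 : w₁ <+: w₁ ++ L₁.flatten := List.prefix_append _ _
        have p2 : w₂ <+: w₁ ++ L₁.flatten := hf ▸ List.prefix_append _ _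
        rcases List.prefix_or_prefix_of_prefix p1 p2 with h | h
        · exact hS _ (h1 _ (by simp)) _ (h2 _ (by simp)) h
        · exact (hS _ (h2 _ (by simp)) _ (h1 _ (by simp)) h).symm
      subst hw
      rw [ih L₂ (fun w hw => h1 w (by simp [hw])) (fun w hw => h2 w (by simp [hw]))
        (List.append_cancel_left hf)]

theorem zterm_summable (U : Computer) (hn : [] ∉ U.domain) (T : ℝ) (hT0 : 0 < T) (hT1 : T < 1) :
    Summable (zterm U T) := by
  refine summable_of_sum_le (c := 1) (fun p => by unfold zterm; positivity) fun F => ?_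
  have hk := InformationTheory.kraft_mcmillan_inequality
    (S := F.map (Function.Embedding.subtype _)) (prefixFree_uniquelyDecodable (S := _) (by
      intro p hp q hq
      simp only [Finset.coe_map, Set.mem_image] at hp hq
      obtain ⟨p, -, rfl⟩ := hp
      obtain ⟨q, -, rfl⟩ := hq
      exact U.prefixFree _ p.2 _ q.2) (by
      intro hp
      simp only [Finset.coe_map, Set.mem_image] at hp
      obtain ⟨p, -, hp⟩ := hp
      apply hn
      rw [← hp]
      exact p.2))
  refine le_trans ?_ hk
  rw [Finset.sum_map]
  refine Finset.sum_le_sum fun p _ => ?_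
  unfold zterm
  have : ((1 : ℝ) / (Fintype.card Bool)) ^ ((Function.Embedding.subtype _ p : List Bool)).length =
      (2 : ℝ) ^ (-((p : List Bool).length : ℝ)) := by
    rw [Real.rpow_neg (by norm_num), Real.rpow_natCast]
    simp
  rw [this]
  apply Real.rpow_le_rpow_of_exponent_le (by norm_num)
  rw [neg_div]
  apply neg_le_neg
  rw [le_div_iff₀ hT0]
  exact mul_le_of_le_one_right (by positivity) hT1.le

noncomputable def constComputer (s : List Bool) : Computer where
  f := fun p => cond (decide (p = [])) (Part.some s) Part.none
  partrec := by
    have hb : Computable (fun p : List Bool => decide (p = [])) := by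
      obtain ⟨_, he⟩ := (Primrec.eq (α := List Bool))
      refine ((he.to_comp).comp (Computable.id.pair (Computable.const []))).of_eq fun _ => ?_
      congr
    exact Partrec.cond hb (Computable.const s).partrec Partrec.none
  prefixFree := by
    have h : ∀ p : List Bool, (cond (decide (p = [])) (Part.some s) Part.none).Dom → p = [] := by
      intro p hp
      by_contra hne
      simp [hne] at hp
    intro p hp q hq _
    rw [h p hp, h q hq]

theorem optimal_nil (U : Computer) (hU : IsOptimal U) : [] ∉ U.domain ∧ ∃ p, p ∈ U.domain := by
  have h : ∀ s, ∃ p, s ∈ U.f p := by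
    intro s
    obtain ⟨d, hd⟩ := hU (constComputer s)
    obtain ⟨p', -, hp⟩ := hd [] (by simp [constComputer])
    exact ⟨p', hp s (by simp [constComputer])⟩
  refine ⟨?_, ?_⟩
  · intro hnil
    have hall : ∀ s, s ∈ U.f [] := by
      intro s
      obtain ⟨p, hp⟩ := h s
      have : [] = p := U.prefixFree [] hnil p (Part.dom_iff_mem.2 ⟨s, hp⟩) List.nil_prefix
      rwa [this]
    have := Part.mem_unique (hall []) (hall [true])
    simp at this
  · obtain ⟨p, hp⟩ := h []
    exact ⟨p, Part.dom_iff_mem.2 ⟨_, hp⟩⟩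

/-- **Theorem (paper Thm 18).** For `T ∈ (0,1)`, if `Z(T)` is right-computable
then `T` is right-computable. -/
theorem rightComputable_Z_imp_rightComputable_T (U : Computer)
    (hU : IsOptimal U) (T : ℝ) (hT0 : 0 < T) (hT1 : T < 1)
    (hZ : RightComputable (∑' p, zterm U T p)) :
    RightComputable T := by
  classical
  obtain ⟨hnil, p0, hp0⟩ := optimal_nil U hU
  obtain ⟨c, hc⟩ := Nat.Partrec.Code.exists_code.1 (Partrec.bind_decode₂_iff.1 U.partrec)
  let D : ℕ → Prop := fun i => ∃ p ∈ U.domain, Encodable.encode p = i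
  let L : ℕ → ℕ := fun i => ((Encodable.decode (α := List Bool) i).getD []).length
  let Dk : ℕ → ℕ → Bool := fun k i => (Nat.Partrec.Code.evaln k c i).isSome
  have hLe : ∀ p : List Bool, L (Encodable.encode p) = p.length := by
    intro p; simp only [L, Encodable.encodek, Option.getD_some]
  have hDiff : ∀ i, D i ↔ (Nat.Partrec.Code.eval c i).Dom := by
    intro i
    rw [hc]
    constructor
    · rintro ⟨p, hp, rfl⟩
      simp only [Encodable.encodek₂]
      simpa using (show (U.f p).Dom from hp)
    · intro hi
      obtain ⟨x, hx⟩ := Part.dom_iff_mem.1 hi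
      simp only [Part.mem_bind_iff, Part.mem_map_iff, Part.mem_ofOption] at hx
      obtain ⟨p, hp, s, hs, -⟩ := hx
      have hp2 : Encodable.encode p = i := Encodable.mem_decode₂.1 hp
      exact ⟨p, Part.dom_iff_mem.2 ⟨s, hs⟩, hp2⟩
  let h : ℝ → ℕ → ℝ := fun t i => if D i then (2 : ℝ) ^ (-(L i : ℝ) / t) else 0
  let e : U.domain → ℕ := fun p => Encodable.encode (p : List Bool)
  have he : Function.Injective e := fun p q hpq =>
    Subtype.ext (Encodable.encode_injective hpq)
  have hcompos : h T ∘ e = zterm U T := by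
    funext p
    have : D (e p) := ⟨p, p.2, rfl⟩
    simp only [Function.comp, h, if_pos this, zterm, e, hLe]
  have hout : ∀ i ∉ Set.range e, h T i = 0 := by
    intro i hi
    refine if_neg ?_
    rintro ⟨p, hp, rfl⟩
    exact hi ⟨⟨p, hp⟩, rfl⟩
  have hsum : Summable (h T) := by
    rw [← he.summable_iff hout, hcompos]
    exact zterm_summable U hnil T hT0 hT1
  have htsum : ∑' i, h T i = ∑' p, zterm U T p := by
    rw [← hcompos]
    refine (he.tsum_eq ?_).symm
    intro i hi
    by_contra hcon
    exact hi (hout i hcon)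
  refine main_nat D Dk L ?_ ?_ ?_ ?_ ?_ ?_ hT0 hT1 h (fun t i hi => if_pos hi)
    (fun t i hi => if_neg hi) hsum (htsum ▸ hZ)
  · exact (Primrec.option_isSome.comp (Nat.Partrec.Code.primrec_evaln.comp
      ((Primrec.fst.pair (Primrec.const c)).pair Primrec.snd))).to_comp
  · exact Computable.list_length.comp
      (Computable.option_getD Computable.decode (Computable.const []))
  · intro k i hk
    obtain ⟨x, hx⟩ := Option.isSome_iff_exists.1 hk
    exact (hDiff i).2 (Part.dom_iff_mem.2 ⟨x, Nat.Partrec.Code.evaln_sound hx⟩)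
  · intro k k' i hkk hk
    obtain ⟨x, hx⟩ := Option.isSome_iff_exists.1 hk
    exact Option.isSome_iff_exists.2 ⟨x, Nat.Partrec.Code.evaln_mono hkk hx⟩
  · intro i hi
    obtain ⟨x, hx⟩ := Part.dom_iff_mem.1 ((hDiff i).1 hi)
    obtain ⟨k, hk⟩ := Nat.Partrec.Code.evaln_complete.1 hx
    exact ⟨k, Option.isSome_iff_exists.2 ⟨x, hk⟩⟩
  · refine ⟨Encodable.encode p0, ⟨p0, hp0, rfl⟩, ?_⟩
    rw [hLe]
    refine List.length_pos_iff.2 ?_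
    rintro rfl
    exact hnil hp0
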